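/- Let X₁,…,Xₙ be mutually independent random variables with finitely many values, let T be a random variable that is a deterministic function of Xⁿ=(X₁,…,Xₙ), and let Y₁,…,Yₙ be finite-valued random variables such that for each i, Xᵢ is conditionally independent of Y^{i−1}=(Y₁,…,Y_{i−1}) given (X^{i−1},T). Then H(T) ≥ ∑_{i=1}^{n} I(Xᵢ ; (T, Y^{i−1})). -/

import Mathlib

open scoped BigOperators

set_option synthInstance.maxSize 512
set_option synthInstance.maxHeartbeats 1000000

noncomputable section

/-- Probability mass of the event `f = a` under the weight function `q` on a finite space. -/
def pmass {Ω α : Type*} [Fintype Ω] [DecidableEq α] (q : Ω → ℝ) (f : Ω → α) (a : α) : ℝ :=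
  ∑ ω, if f ω = a then q ω else 0

/-- Shannon entropy (in bits) of the value of `f` under `q`. -/
def ent {Ω α : Type*} [Fintype Ω] [Fintype α] [DecidableEq α] (q : Ω → ℝ) (f : Ω → α) : ℝ :=
  -∑ a, pmass q f a * Real.logb 2 (pmass q f a)

/-- Conditional Shannon entropy `H(f ∣ g)` (in bits). -/
def condEnt {Ω α β : Type*} [Fintype Ω] [Fintype α] [DecidableEq α] [Fintype β] [DecidableEq β]
    (q : Ω → ℝ) (f : Ω → α) (g : Ω → β) : ℝ :=
  ent q (fun ω => (f ω, g ω)) - ent q g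

/-- Mutual information `I(f ; g)` (in bits). -/
def mutInf {Ω α β : Type*} [Fintype Ω] [Fintype α] [DecidableEq α] [Fintype β] [DecidableEq β]
    (q : Ω → ℝ) (f : Ω → α) (g : Ω → β) : ℝ :=
  ent q f + ent q g - ent q (fun ω => (f ω, g ω))

/-- Conditional mutual information `I(f ; g ∣ h)` (in bits). -/
def condMutInf {Ω α β γ : Type*} [Fintype Ω] [Fintype α] [DecidableEq α] [Fintype β]
    [DecidableEq β] [Fintype γ] [DecidableEq γ]
    (q : Ω → ℝ) (f : Ω → α) (g : Ω → β) (h : Ω → γ) : ℝ :=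
  condEnt q f h - condEnt q f (fun ω => (g ω, h ω))

/-- `q` is a probability mass function on `Ω`. -/
def IsPMF {Ω : Type*} [Fintype Ω] (q : Ω → ℝ) : Prop :=
  (∀ ω, 0 ≤ q ω) ∧ ∑ ω, q ω = 1

/-! Given `T`, the chain rule gives `∑ᵢ H(Xᵢ ∣ Xⁱ⁻¹, T) = H(Xⁿ ∣ T)`. Conditional independence
lets one add `Yⁱ⁻¹` to the conditioning for free, and then forgetting `Xⁱ⁻¹` can only raise the
entropy, so `H(Xᵢ ∣ Xⁱ⁻¹, T) ≤ H(Xᵢ ∣ T, Yⁱ⁻¹)`. Subtracting from `∑ᵢ H(Xᵢ) = H(Xⁿ)` bounds the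
sum of the mutual informations by `I(Xⁿ ; T) ≤ H(T)`. -/

section Mass

variable {Ω α β γ : Type*} [Fintype Ω] [DecidableEq α] [DecidableEq β] [DecidableEq γ] {q : Ω → ℝ}

lemma pmass_nonneg (hq : ∀ ω, 0 ≤ q ω) (f : Ω → α) (a : α) : 0 ≤ pmass q f a :=
  Finset.sum_nonneg fun ω _ => ite_nonneg (hq ω) le_rfl

lemma le_pmass_apply (hq : ∀ ω, 0 ≤ q ω) (f : Ω → α) (ω : Ω) : q ω ≤ pmass q f (f ω) := by
  simpa only [pmass, if_true] using
    Finset.single_le_sum (f := fun ω' => if f ω' = f ω then q ω' else 0)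
      (fun ω' _ => ite_nonneg (hq ω') le_rfl) (Finset.mem_univ ω)

lemma pmass_apply_pos (hq : ∀ ω, 0 ≤ q ω) (f : Ω → α) {ω : Ω} (hω : 0 < q ω) :
    0 < pmass q f (f ω) :=
  hω.trans_le (le_pmass_apply hq f ω)

lemma sum_pmass_mul [Fintype α] (q : Ω → ℝ) (f : Ω → α) (F : α → ℝ) :
    ∑ a, pmass q f a * F a = ∑ ω, q ω * F (f ω) := by
  simp only [pmass, Finset.sum_mul, ite_mul, zero_mul]
  rw [Finset.sum_comm]
  simp only [Finset.sum_ite_eq, Finset.mem_univ, if_true]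

lemma sum_pmass [Fintype α] (q : Ω → ℝ) (f : Ω → α) : ∑ a, pmass q f a = ∑ ω, q ω := by
  simpa only [mul_one] using sum_pmass_mul q f fun _ => 1

lemma sum_pmass_prodMk [Fintype α] (q : Ω → ℝ) (f : Ω → α) (g : Ω → β) (b : β) :
    ∑ a, pmass q (fun ω => (f ω, g ω)) (a, b) = pmass q g b := by
  simp only [pmass, Prod.mk.injEq, ite_and]
  rw [Finset.sum_comm]
  simp only [Finset.sum_ite_eq, Finset.mem_univ, if_true]

lemma sum_pmass_mul_pmass_div_pmass [Fintype α] [Fintype β] [Fintype γ] (q : Ω → ℝ)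
    (f : Ω → α) (g : Ω → β) (h : Ω → γ) :
    ∑ x : α × β × γ, pmass q (fun ω => (f ω, h ω)) (x.1, x.2.2) *
      pmass q (fun ω => (g ω, h ω)) x.2 / pmass q h x.2.2 = ∑ ω, q ω := by
  calc _ = ∑ c, ∑ b, ∑ a, pmass q (fun ω => (f ω, h ω)) (a, c) *
        pmass q (fun ω => (g ω, h ω)) (b, c) / pmass q h c := by
        rw [Fintype.sum_prod_type_right, Fintype.sum_prod_type_right]
    _ = ∑ c, pmass q h c * pmass q h c / pmass q h c := by
        simp only [← Finset.sum_div, ← Finset.sum_mul, ← Finset.mul_sum, sum_pmass_prodMk]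
    _ = ∑ ω, q ω := by simp only [mul_self_div_self, sum_pmass]

end Mass

section Entropy

variable {Ω α β γ : Type*} [Fintype Ω] [Fintype α] [DecidableEq α] [Fintype β] [DecidableEq β]
  [Fintype γ] [DecidableEq γ] {q : Ω → ℝ}

lemma ent_eq_neg_sum_mul_logb (q : Ω → ℝ) (f : Ω → α) :
    ent q f = -∑ ω, q ω * Real.logb 2 (pmass q f (f ω)) := by
  rw [ent, sum_pmass_mul q f fun a => Real.logb 2 (pmass q f a)]

lemma ent_congr (q : Ω → ℝ) {f : Ω → α} {g : Ω → β}
    (hfg : ∀ ω ω', f ω = f ω' ↔ g ω = g ω') : ent q f = ent q g := by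
  simp only [ent_eq_neg_sum_mul_logb, pmass, hfg]

lemma condEnt_congr_right (q : Ω → ℝ) (f : Ω → α) {g : Ω → β} {h : Ω → γ}
    (hgh : ∀ ω ω', g ω = g ω' ↔ h ω = h ω') : condEnt q f g = condEnt q f h := by
  have hpair : ent q (fun ω => (f ω, g ω)) = ent q (fun ω => (f ω, h ω)) :=
    ent_congr q fun ω ω' => by simp only [Prod.mk.injEq, hgh]
  rw [condEnt, condEnt, hpair, ent_congr q hgh]

lemma mutInf_eq_ent_sub_condEnt (q : Ω → ℝ) (f : Ω → α) (g : Ω → β) :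
    mutInf q f g = ent q f - condEnt q f g := by
  rw [mutInf, condEnt]
  ring

lemma ent_le_neg_sum_mul_logb (hq : ∀ ω, 0 ≤ q ω) (f : Ω → α) {F : α → ℝ} (hF : ∀ a, 0 ≤ F a)
    (hpos : ∀ ω, 0 < q ω → 0 < F (f ω)) (hsum : ∑ a, F a ≤ ∑ ω, q ω) :
    ent q f ≤ -∑ ω, q ω * Real.logb 2 (F (f ω)) := by
  set P := pmass q f
  have hterm (ω : Ω) : q ω * (Real.log (F (f ω)) - Real.log (P (f ω))) ≤
      q ω * (F (f ω) / P (f ω) - 1) := by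
    rcases (hq ω).eq_or_lt with h0 | hω
    · simp only [← h0, zero_mul, le_refl]
    have hFω := hpos ω hω
    have hPω : 0 < P (f ω) := pmass_apply_pos hq f hω
    rw [← Real.log_div hFω.ne' hPω.ne']
    exact mul_le_mul_of_nonneg_left (Real.log_le_sub_one_of_pos (div_pos hFω hPω)) hω.le
  have hratio : ∑ ω, q ω * (F (f ω) / P (f ω)) ≤ ∑ a, F a := by
    rw [← sum_pmass_mul q f fun a => F a / P a]
    refine Finset.sum_le_sum fun a _ => ?_
    rw [mul_div_left_comm]
    exact mul_le_of_le_one_right (hF a) (div_self_le_one _)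
  have hlog : ∑ ω, q ω * Real.log (F (f ω)) ≤ ∑ ω, q ω * Real.log (P (f ω)) := by
    have := Finset.sum_le_sum fun ω (_ : ω ∈ Finset.univ) => hterm ω
    simp only [mul_sub, mul_one, Finset.sum_sub_distrib] at this
    linarith
  rw [ent_eq_neg_sum_mul_logb, neg_le_neg_iff]
  simp only [Real.logb, mul_div_assoc', ← Finset.sum_div]
  gcongr

lemma condEnt_prodMk_le (hq : ∀ ω, 0 ≤ q ω) (f : Ω → α) (g : Ω → β) (h : Ω → γ) :
    condEnt q f (fun ω => (g ω, h ω)) ≤ condEnt q f h := by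
  set Pfh := pmass q (fun ω => (f ω, h ω))
  set Pgh := pmass q (fun ω => (g ω, h ω))
  set Ph := pmass q h
  have hpos {ω : Ω} (hω : 0 < q ω) :
      0 < Pfh (f ω, h ω) ∧ 0 < Pgh (g ω, h ω) ∧ 0 < Ph (h ω) :=
    ⟨pmass_apply_pos hq (fun ω => (f ω, h ω)) hω, pmass_apply_pos hq (fun ω => (g ω, h ω)) hω,
      pmass_apply_pos hq h hω⟩
  -- The comparison weight makes `f` and `g` conditionally independent given `h`.
  have hgibbs := ent_le_neg_sum_mul_logb hq (fun ω => (f ω, g ω, h ω))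
    (F := fun x => Pfh (x.1, x.2.2) * Pgh x.2 / Ph x.2.2)
    (fun x => div_nonneg (mul_nonneg (pmass_nonneg hq _ _) (pmass_nonneg hq _ _))
      (pmass_nonneg hq _ _))
    (fun ω hω => div_pos (mul_pos (hpos hω).1 (hpos hω).2.1) (hpos hω).2.2)
    (sum_pmass_mul_pmass_div_pmass q f g h).le
  have hlogb (ω : Ω) :
      q ω * Real.logb 2 (Pfh (f ω, h ω) * Pgh (g ω, h ω) / Ph (h ω)) =
        q ω * Real.logb 2 (Pfh (f ω, h ω)) + q ω * Real.logb 2 (Pgh (g ω, h ω)) -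
          q ω * Real.logb 2 (Ph (h ω)) := by
    rcases (hq ω).eq_or_lt with h0 | hω
    · simp only [← h0, zero_mul, add_zero, sub_zero]
    obtain ⟨hfh, hgh, hh⟩ := hpos hω
    rw [Real.logb_div (mul_pos hfh hgh).ne' hh.ne', Real.logb_mul hfh.ne' hgh.ne']
    ring
  simp only [hlogb, Finset.sum_sub_distrib, Finset.sum_add_distrib] at hgibbs
  rw [condEnt, condEnt, ent_eq_neg_sum_mul_logb q (fun ω => (f ω, h ω)),
    ent_eq_neg_sum_mul_logb q (fun ω => (g ω, h ω)), ent_eq_neg_sum_mul_logb q h]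
  linarith

lemma condEnt_self_prodMk (q : Ω → ℝ) (f : Ω → α) (g : Ω → β) :
    condEnt q f (fun ω => (f ω, g ω)) = 0 :=
  sub_eq_zero.mpr <| ent_congr q fun ω ω' => by simp only [Prod.mk.injEq, and_self_left]

lemma condEnt_nonneg (hq : ∀ ω, 0 ≤ q ω) (f : Ω → α) (g : Ω → β) : 0 ≤ condEnt q f g :=
  (condEnt_self_prodMk q f g).ge.trans (condEnt_prodMk_le hq f f g)

lemma mutInf_comm (q : Ω → ℝ) (f : Ω → α) (g : Ω → β) : mutInf q f g = mutInf q g f := by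
  have hswap : ent q (fun ω => (f ω, g ω)) = ent q (fun ω => (g ω, f ω)) :=
    ent_congr q fun ω ω' => by simp only [Prod.mk.injEq, and_comm]
  rw [mutInf, mutInf, hswap, add_comm]

lemma mutInf_le_ent_right (hq : ∀ ω, 0 ≤ q ω) (f : Ω → α) (g : Ω → β) :
    mutInf q f g ≤ ent q g := by
  rw [mutInf_comm, mutInf_eq_ent_sub_condEnt]
  exact sub_le_self _ (condEnt_nonneg hq g f)

lemma mutInf_le_of_condMutInf_eq_zero {δ : Type*} [Fintype δ] [DecidableEq δ]
    (hq : ∀ ω, 0 ≤ q ω) {f : Ω → α} {g : Ω → β} {h : Ω → γ} {k : Ω → δ}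
    (hfg : condMutInf q f g (fun ω => (h ω, k ω)) = 0) :
    mutInf q f (fun ω => (k ω, g ω)) ≤ ent q f - condEnt q f (fun ω => (h ω, k ω)) := by
  rw [mutInf_eq_ent_sub_condEnt]
  refine sub_le_sub_left ?_ _
  calc condEnt q f (fun ω => (h ω, k ω))
      = condEnt q f (fun ω => (g ω, h ω, k ω)) := sub_eq_zero.mp hfg
    _ = condEnt q f (fun ω => (h ω, k ω, g ω)) :=
        condEnt_congr_right q f fun ω ω' => by simp only [Prod.mk.injEq]; tauto
    _ ≤ condEnt q f (fun ω => (k ω, g ω)) := condEnt_prodMk_le hq f h fun ω => (k ω, g ω)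

end Entropy

section Families

variable {Ω 𝒯 : Type*} [Fintype Ω] [Fintype 𝒯] [DecidableEq 𝒯] {q : Ω → ℝ}

lemma ent_pi_eq_sum_ent {ι : Type*} [Fintype ι] [DecidableEq ι] {𝒳 : ι → Type*}
    [∀ i, Fintype (𝒳 i)] [∀ i, DecidableEq (𝒳 i)] (hq : ∀ ω, 0 ≤ q ω) (X : ∀ i, Ω → 𝒳 i)
    (hindep : ∀ xs : ∀ i, 𝒳 i, pmass q (fun ω i => X i ω) xs = ∏ i, pmass q (X i) (xs i)) :
    ent q (fun ω i => X i ω) = ∑ i, ent q (X i) := by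
  simp only [ent_eq_neg_sum_mul_logb, hindep]
  rw [Finset.sum_neg_distrib, Finset.sum_comm]
  congr! 2 with ω
  rw [← Finset.mul_sum]
  rcases (hq ω).eq_or_lt with h0 | hω
  · simp only [← h0, zero_mul]
  rw [Real.logb_prod _ _ fun i _ => (pmass_apply_pos hq (X i) hω).ne']

variable {n : ℕ} {𝒳 : Fin n → Type*} [∀ i, Fintype (𝒳 i)] [∀ i, DecidableEq (𝒳 i)]

lemma ent_prodMk_pi_lt (q : Ω → ℝ) (X : ∀ i, Ω → 𝒳 i) (T : Ω → 𝒯) (i : Fin n) :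
    ent q (fun ω => (X i ω, (fun j : {j : Fin n // j.1 < i.1} => X j.1 ω), T ω)) =
      ent q (fun ω => ((fun j : {j : Fin n // j.1 < i.1 + 1} => X j.1 ω), T ω)) := by
  refine ent_congr q fun ω ω' => ?_
  simp only [Prod.mk.injEq, funext_iff, Subtype.forall]
  constructor
  · rintro ⟨hi, hlt, hT⟩
    refine ⟨fun j hj => ?_, hT⟩
    rcases Nat.lt_succ_iff_lt_or_eq.mp hj with hji | hji
    · exact hlt j hji
    · exact Fin.ext hji ▸ hi
  · rintro ⟨hle, hT⟩
    exact ⟨hle i i.1.lt_succ_self, fun j hj => hle j (Nat.lt_succ_of_lt hj), hT⟩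

lemma sum_condEnt_pi_lt (q : Ω → ℝ) (X : ∀ i, Ω → 𝒳 i) (T : Ω → 𝒯) :
    ∑ i : Fin n, condEnt q (X i)
      (fun ω => ((fun j : {j : Fin n // j.1 < i.1} => X j.1 ω), T ω)) =
        condEnt q (fun ω i => X i ω) T := by
  let H (k : ℕ) : ℝ := ent q (fun ω => ((fun j : {j : Fin n // j.1 < k} => X j.1 ω), T ω))
  have hzero : H 0 = ent q T := ent_congr q fun ω ω' => by
    simp only [Prod.mk.injEq, funext_iff, Subtype.forall, Nat.not_lt_zero, IsEmpty.forall_iff,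
      implies_true, true_and]
  have hall : H n = ent q (fun ω => ((fun i => X i ω), T ω)) := ent_congr q fun ω ω' => by
    simp only [Prod.mk.injEq, funext_iff, Subtype.forall, Fin.is_lt, forall_const]
  calc _ = ∑ i : Fin n, (H (i + 1) - H i) := by simp only [condEnt, ent_prodMk_pi_lt, H]
    _ = H n - H 0 := by
        rw [Fin.sum_univ_eq_sum_range (fun k => H (k + 1) - H k), Finset.sum_range_sub]
    _ = condEnt q (fun ω i => X i ω) T := by rw [hzero, hall, condEnt]

theorem converse_chain_causal_general {𝒵 : Fin n → Type*} [∀ i, Fintype (𝒵 i)]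
    [∀ i, DecidableEq (𝒵 i)] (hq : ∀ ω, 0 ≤ q ω) (X : ∀ i, Ω → 𝒳 i) (Z : ∀ i, Ω → 𝒵 i)
    (T : Ω → 𝒯)
    (hindep : ∀ xs : ∀ i, 𝒳 i, pmass q (fun ω i => X i ω) xs = ∏ i, pmass q (X i) (xs i))
    (hci : ∀ i : Fin n, condMutInf q (X i) (Z i)
      (fun ω => ((fun j : {j : Fin n // j.1 < i.1} => X j.1 ω), T ω)) = 0) :
    ∑ i, mutInf q (X i) (fun ω => (T ω, Z i ω)) ≤ mutInf q (fun ω i => X i ω) T := by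
  calc ∑ i, mutInf q (X i) (fun ω => (T ω, Z i ω))
      ≤ ∑ i : Fin n, (ent q (X i) - condEnt q (X i)
          (fun ω => ((fun j : {j : Fin n // j.1 < i.1} => X j.1 ω), T ω))) :=
        Finset.sum_le_sum fun i _ => mutInf_le_of_condMutInf_eq_zero hq (hci i)
    _ = ent q (fun ω i => X i ω) - condEnt q (fun ω i => X i ω) T := by
        rw [Finset.sum_sub_distrib, sum_condEnt_pi_lt, ent_pi_eq_sum_ent hq X hindep]
    _ = mutInf q (fun ω i => X i ω) T := (mutInf_eq_ent_sub_condEnt q _ T).symm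

end Families

/-- Let `X₁,…,Xₙ` be mutually independent, `T` a deterministic function of
`Xⁿ`, and suppose that for each `i`, `Xᵢ` is conditionally independent of
`Y^{i−1}` given `(X^{i−1}, T)` (expressed as vanishing conditional mutual information).
Then `H(T) ≥ ∑ᵢ I(Xᵢ;(T, Y^{i−1}))`. -/
theorem converse_chain_causal {Ω 𝒳 𝒴 𝒯 : Type*} [Fintype Ω]
    [Fintype 𝒳] [DecidableEq 𝒳] [Fintype 𝒴] [DecidableEq 𝒴] [Fintype 𝒯] [DecidableEq 𝒯]
    (p : Ω → ℝ) (hp : IsPMF p) {n : ℕ}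
    (X : Fin n → Ω → 𝒳) (Y : Fin n → Ω → 𝒴) (T : Ω → 𝒯)
    (hindep : ∀ xs : Fin n → 𝒳,
      pmass p (fun ω => (fun i => X i ω)) xs = ∏ i, pmass p (X i) (xs i))
    (hT : ∃ φ : (Fin n → 𝒳) → 𝒯, ∀ ω, T ω = φ (fun i => X i ω))
    (hci : ∀ i : Fin n,
      condMutInf p (X i) (fun ω => (fun j : {j : Fin n // j.1 < i.1} => Y j.1 ω))
        (fun ω => ((fun j : {j : Fin n // j.1 < i.1} => X j.1 ω), T ω)) = 0) :
    ent p T ≥ ∑ i, mutInf p (X i)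
      (fun ω => (T ω, fun j : {j : Fin n // j.1 < i.1} => Y j.1 ω)) :=
  (converse_chain_causal_general hp.1 X (fun i ω (j : {j : Fin n // j.1 < i.1}) => Y j.1 ω) T
    hindep hci).trans (mutInf_le_ent_right hp.1 _ T)
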